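/- Let φ be a 3iet preserving morphism whose incidence matrix M_φ is nonsingular (det M_φ ≠ 0). Then M_φ belongs to E(3,ℕ), i.e., M_φ · E · M_φᵀ = E or M_φ · E · M_φᵀ = −E, and det M_φ = 1 or det M_φ = −1, where E = ![![0,1,1], ![-1,0,1], ![-1,-1,0]]. -/

import Mathlib

/-- The three-letter alphabet {A, B, C}. -/
inductive Letter : Type
  | A | B | C
  deriving DecidableEq

/-- Left-closed 3-interval exchange transformation with parameters (α, β, γ),
defined piecewise on the domain [0, α+β+γ) (and extended by the same formulas
elsewhere). -/
noncomputable def Tleft (α β γ : ℝ) (x : ℝ) : ℝ :=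
  if x < α then x + β + γ else if x < α + β then x - α + γ else x - α - β

/-- The inverse of `Tleft` on its domain. -/
noncomputable def TleftInv (α β γ : ℝ) (x : ℝ) : ℝ :=
  if x < γ then x + α + β else if x < β + γ then x + α - γ else x - β - γ

/-- Right-closed 3-interval exchange transformation with parameters (α, β, γ),
defined piecewise on the domain (0, α+β+γ]. -/
noncomputable def Tright (α β γ : ℝ) (x : ℝ) : ℝ :=
  if x ≤ α then x + β + γ else if x ≤ α + β then x - α + γ else x - α - β

/-- The inverse of `Tright` on its domain. -/
noncomputable def TrightInv (α β γ : ℝ) (x : ℝ) : ℝ :=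
  if x ≤ γ then x + α + β else if x ≤ β + γ then x + α - γ else x - β - γ

/-- ℤ-indexed iteration: nonnegative powers use `f`, negative powers use the
inverse map `g`. -/
noncomputable def zIter (f g : ℝ → ℝ) : ℤ → ℝ → ℝ
  | Int.ofNat n => f^[n]
  | Int.negSucc n => g^[n + 1]

/-- The letter coding of a point, left-closed convention:
A on [0,α), B on [α,α+β), C on [α+β,α+β+γ). -/
noncomputable def codeLeft (α β : ℝ) (x : ℝ) : Letter :=
  if x < α then Letter.A else if x < α + β then Letter.B else Letter.C

/-- The letter coding of a point, right-closed convention: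
A on (0,α], B on (α,α+β], C on (α+β,α+β+γ]. -/
noncomputable def codeRight (α β : ℝ) (x : ℝ) : Letter :=
  if x ≤ α then Letter.A else if x ≤ α + β then Letter.B else Letter.C

/-- The biinfinite word coding the orbit of x₀ under the left-closed
3-interval exchange transformation with parameters (α, β, γ). -/
noncomputable def uLeft (α β γ x₀ : ℝ) (n : ℤ) : Letter :=
  codeLeft α β (zIter (Tleft α β γ) (TleftInv α β γ) n x₀)

/-- The biinfinite word coding the orbit of x₀ under the right-closed
3-interval exchange transformation with parameters (α, β, γ). -/
noncomputable def uRight (α β γ x₀ : ℝ) (n : ℤ) : Letter :=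
  codeRight α β (zIter (Tright α β γ) (TrightInv α β γ) n x₀)

/-- A biinfinite word over {A,B,C} is a 3iet word if it codes the orbit of a
point under a 3-interval exchange transformation (in either convention) whose
parameters α, β, γ > 0 satisfy: α+β and β+γ are linearly independent over ℚ. -/
def Is3ietWord (u : ℤ → Letter) : Prop :=
  ∃ α β γ x₀ : ℝ, 0 < α ∧ 0 < β ∧ 0 < γ ∧
    LinearIndependent ℚ ![α + β, β + γ] ∧
    ((x₀ ∈ Set.Ico (0 : ℝ) (α + β + γ) ∧ u = uLeft α β γ x₀) ∨
     (x₀ ∈ Set.Ioc (0 : ℝ) (α + β + γ) ∧ u = uRight α β γ x₀))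

/-- A morphism over the alphabet {A,B,C}, determined by the images of the
three letters (as an endomorphism of the free monoid {A,B,C}*). -/
abbrev Morph := Letter → List Letter

/-- `IsImageWord φ u v` says that v is the biinfinite word
···φ(u₋₂)φ(u₋₁)φ(u₀)φ(u₁)···, in which the block φ(u₀) starts at position 0:
`c m` is the position at which the block φ(u_m) starts. -/
def IsImageWord (φ : Morph) (u v : ℤ → Letter) : Prop :=
  ∃ c : ℤ → ℤ, c 0 = 0 ∧ (∀ m : ℤ, c (m + 1) = c m + (φ (u m)).length) ∧
    ∀ (m : ℤ) (i : ℕ) (h : i < (φ (u m)).length),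
      v (c m + (i : ℤ)) = (φ (u m)).get ⟨i, h⟩

/-- A morphism is 3iet preserving if its letter images are nonempty (so that
it acts on biinfinite words) and it maps every 3iet word to a 3iet word. -/
def Preserves3iet (φ : Morph) : Prop :=
  (∀ a, φ a ≠ []) ∧
  ∀ u v : ℤ → Letter, Is3ietWord u → IsImageWord φ u v → Is3ietWord v

open Matrix

/-- The letters in order A, B, C. -/
def ltr : Fin 3 → Letter := ![Letter.A, Letter.B, Letter.C]

/-- The incidence matrix of a morphism: its (i,j) entry is the number of
occurrences of the j-th letter in the image of the i-th letter. -/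
def incMat (φ : Morph) : Matrix (Fin 3) (Fin 3) ℤ :=
  fun i j => ((φ (ltr i)).count (ltr j) : ℤ)

/-- The matrix E from the paper. -/
def Emat : Matrix (Fin 3) (Fin 3) ℤ := !![0, 1, 1; -1, 0, 1; -1, -1, 0]

/-- The monoid E(3,ℕ). -/
def E3N : Set (Matrix (Fin 3) (Fin 3) ℤ) :=
  {M | (∀ i j, 0 ≤ M i j) ∧
    (M * Emat * Mᵀ = Emat ∨ M * Emat * Mᵀ = -Emat) ∧
    (M.det = 1 ∨ M.det = -1)}

/-!
For a 3iet word, replacing `A ↦ 0`, `C ↦ 1` and every `B` by `01`, or every `B` by `10`, gives a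
word whose walk (up by `β + γ` at each `0`, down by `α + β` at each `1`) stays in an interval of
length `α + 2β + γ`; hence both binary codings are balanced. The binary codings of `φ(u)` are
therefore balanced for every 3iet word `u`.

For parameters close to a rational degeneration, 3iet words contain `(A C^(q+1))^k (B C^q)^k` and
`(B C^q)^k (C A C^q)^k` for arbitrary `q` and `k`. Write `a`, `b`, `c` for the images under `φ` of
`A C^q`, `B C^q`, `C`, and `L_l` for the vector counting zeros and ones in the binary codings of
`φ(l)`.

* Balance of the binary codings of `(ac)^k b^k` for all `k` forces those of `ac` and `b` to have
  equal slopes. The cases `q = 0, 1` make all three determinants `det (L_i, L_j)`, `i < j`, equal to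
  a single integer `λ`, which says `M E Mᵀ = λ E`. Moreover `det M = λ μ` with
  `μ = |φ(B)|_B - |φ(A)|_B - |φ(C)|_B`, and `L_B = L_A + L_C` when `λ ≠ 0`.
* For binary words `U`, `V` of length `N` with `Y` ones each, balance of `U³V³` bounds the
  difference of the sums of ones over all prefixes by `g = gcd (N, Y)`. This applies to the codings
  of `ac`, `b` and of `b`, `ca`. The prefix sums of `ac` and `ca` differ by exactly `λ`, a multiple
  of `g`, while passing from `B ↦ 01` to `B ↦ 10` changes the difference of the prefix sums of `b`
  and `ac` by exactly `μ ≠ 0`. Hence `|λ| = g` and `|μ| ≤ g`.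
* Thus `λ` divides `L_A + L_C` and `L_A + 2 L_C`, so it divides `L_A` and `L_C`, so `λ²` divides
  `λ = det (L_A, L_C)`. Therefore `|λ| = |μ| = 1`.
-/

/-! ### Balanced binary words -/

/-- A finite binary word is balanced if any two of its factors of equal length contain numbers of
`true`s that differ by at most one. -/
def BalancedWord (W : List Bool) : Prop :=
  ∀ U V : List Bool, U <:+: W → V <:+: W → U.length = V.length →
    U.count true ≤ V.count true + 1

lemma BalancedWord.abs_count_window_sub_le {W : List Bool} (h : BalancedWord W) {l i j : ℕ}
    (hi : i + l ≤ W.length) (hj : j + l ≤ W.length) :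
    |(((W.take (i + l)).count true : ℤ) - (W.take i).count true) -
      ((W.take (j + l)).count true - (W.take j).count true)| ≤ 1 := by
  have isInfix (i : ℕ) : (W.drop i).take l <:+: W :=
    (List.take_prefix _ _).isInfix.trans (List.drop_suffix _ _).isInfix
  have length_eq : ((W.drop i).take l).length = ((W.drop j).take l).length := by
    simp only [List.length_take, List.length_drop]; omega
  have hij := h _ _ (isInfix i) (isInfix j) length_eq
  have hji := h _ _ (isInfix j) (isInfix i) length_eq.symm
  simp only [List.take_add, List.count_append]
  rw [abs_le]
  push_cast
  omega

/-- The power `W ^ k` of a word in the free monoid. -/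
def wordPow {α : Type*} (W : List α) (k : ℕ) : List α := (List.replicate k W).flatten

section wordPow

variable {α β : Type*} (W : List α) (k : ℕ)

lemma wordPow_zero : wordPow W 0 = [] := rfl

lemma wordPow_succ : wordPow W (k + 1) = W ++ wordPow W k := by
  simp only [wordPow, List.replicate_succ, List.flatten_cons]

lemma wordPow_add (l : ℕ) : wordPow W (k + l) = wordPow W k ++ wordPow W l := by
  simp only [wordPow, List.replicate_add, List.flatten_append]

lemma length_wordPow : (wordPow W k).length = k * W.length := by
  simp [wordPow]

lemma count_wordPow [BEq α] (a : α) : (wordPow W k).count a = k * W.count a := by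
  simp [wordPow, List.count_flatten]

lemma flatMap_wordPow (f : α → List β) : (wordPow W k).flatMap f = wordPow (W.flatMap f) k := by
  induction k with
  | zero => rfl
  | succ k ih => rw [wordPow_succ, wordPow_succ, List.flatMap_append, ih]

lemma count_take_wordPow [BEq α] (a : α) {i : ℕ} (hi : i ≤ k * W.length) :
    ((wordPow W k).take i).count a =
      i / W.length * W.count a + (W.take (i % W.length)).count a := by
  induction k generalizing i with
  | zero =>
    obtain rfl : i = 0 := by omega
    simp
  | succ k ih =>
    rw [wordPow_succ]
    rcases lt_or_ge i W.length with hlt | hge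
    · rw [List.take_append_of_le_length hlt.le, Nat.div_eq_of_lt hlt, Nat.mod_eq_of_lt hlt]
      omega
    · obtain ⟨j, rfl⟩ := Nat.exists_eq_add_of_le hge
      rw [List.take_length_add_append, List.count_append, Nat.add_mod_left]
      rcases Nat.eq_zero_or_pos W.length with h0 | hpos
      · obtain rfl := List.length_eq_zero_iff.1 h0
        simp [wordPow]
      · rw [ih (by rw [add_mul] at hi; omega), Nat.add_div_left _ hpos]
        ring

end wordPow

/-- The words `U ^ k V ^ k` are balanced for all `k`. -/
def BalancedPowers (U V : List Bool) : Prop :=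
  ∀ k, BalancedWord (wordPow U k ++ wordPow V k)

lemma BalancedPowers.length_mul_count_eq {U V : List Bool} (h : BalancedPowers U V) :
    U.length * V.count true = V.length * U.count true := by
  -- The factors `U ^ (2|V|)` and `V ^ (2|U|)` have equal lengths, and their counts, being even,
  -- cannot differ by exactly one.
  set k := 2 * (U.length + V.length) with hk
  have infix_left : wordPow U (2 * V.length) <:+: wordPow U k ++ wordPow V k := by
    refine ⟨[], wordPow U (2 * U.length) ++ wordPow V k, ?_⟩
    rw [List.nil_append, ← List.append_assoc, ← wordPow_add, hk, mul_add, add_comm]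
  have infix_right : wordPow V (2 * U.length) <:+: wordPow U k ++ wordPow V k := by
    refine ⟨wordPow U k, wordPow V (2 * V.length), ?_⟩
    rw [List.append_assoc, ← wordPow_add, hk, mul_add]
  have length_eq : (wordPow U (2 * V.length)).length = (wordPow V (2 * U.length)).length := by
    rw [length_wordPow, length_wordPow]; ring
  have hUV := h k _ _ infix_left infix_right length_eq
  have hVU := h k _ _ infix_right infix_left length_eq.symm
  rw [count_wordPow, count_wordPow, mul_assoc, mul_assoc] at hUV hVU
  omega

/-! ### Prefix sums of balanced words -/

/-- The sum, over all proper prefixes of `W`, of the number of `true`s they contain. -/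
def prefixSum (W : List Bool) : ℤ :=
  ∑ i ∈ Finset.range W.length, ((W.take i).count true : ℤ)

lemma prefixSum_append (U V : List Bool) :
    prefixSum (U ++ V) = prefixSum U + prefixSum V + V.length * U.count true := by
  have sum_left : ∑ i ∈ Finset.range U.length, (((U ++ V).take i).count true : ℤ) = prefixSum U :=
    Finset.sum_congr rfl fun i hi => by
      rw [List.take_append_of_le_length (Finset.mem_range.1 hi).le]
  simp only [prefixSum, List.length_append, Finset.sum_range_add, sum_left,
    List.take_length_add_append, List.count_append, Nat.cast_add, Finset.sum_add_distrib,
    Finset.sum_const, Finset.card_range, nsmul_eq_mul]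
  ring

/-- For a word `U` of length `N` with `Y` letters `true`, the `N`-fold deviation of the number of
`true`s in a prefix of `U U U ⋯` from its mean value: a prefix of length `x` with `t` letters
`true` has defect `N t - Y x`, which only depends on `x` modulo `N`. -/
def defect (N : ℕ) (U : List Bool) (x : ZMod N) : ℤ :=
  N * (U.take x.val).count true - U.count true * x.val

section defect

variable {N : ℕ} {U V : List Bool}

lemma defect_natCast (hU : U.length = N) {k i : ℕ} (hi : i ≤ k * N) :
    defect N U i = N * ((wordPow U k).take i).count true - U.count true * i := by
  subst hU
  have hdiv : (U.length : ℤ) * (i / U.length : ℕ) + (i % U.length : ℕ) = i := by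
    exact_mod_cast Nat.div_add_mod i U.length
  rw [count_take_wordPow U k true hi, defect, ZMod.val_natCast, Nat.cast_add, Nat.cast_mul]
  linear_combination (-U.count true : ℤ) * hdiv

lemma intCast_defect [NeZero N] (x : ZMod N) : (defect N U x : ZMod N) = -(U.count true * x) := by
  simp [defect]

lemma sum_defect [NeZero N] (hU : U.length = N) :
    ∑ x, defect N U x = N * prefixSum U - U.count true * ∑ x : ZMod N, (x.val : ℤ) := by
  have hsum : ∑ x : ZMod N, ((U.take x.val).count true : ℤ) = prefixSum U := by
    rw [prefixSum, hU]
    obtain ⟨n, rfl⟩ := Nat.exists_eq_succ_of_ne_zero (NeZero.ne N)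
    exact Fin.sum_univ_eq_sum_range (fun i => ((U.take i).count true : ℤ)) _
  simp only [defect, Finset.sum_sub_distrib, ← Finset.mul_sum, hsum]

lemma BalancedPowers.abs_defect_sub_le [NeZero N] (h : BalancedPowers U V) (hU : U.length = N)
    (hV : V.length = N) (hcount : V.count true = U.count true) (i j m : ZMod N) :
    |(defect N V (i + m) - defect N U i) - (defect N U (j + m) - defect N U j)| ≤ N := by
  obtain ⟨W, hW⟩ : ∃ W, W = wordPow U 3 ++ wordPow V 3 := ⟨_, rfl⟩
  have length_U : (wordPow U 3).length = 3 * N := by rw [length_wordPow, hU]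
  have length_W : W.length = 6 * N := by
    rw [hW, List.length_append, length_U, length_wordPow, hV]; ring
  have defect_left (p : ℕ) (hp : p ≤ 3 * N) :
      defect N U p = N * (W.take p).count true - U.count true * p := by
    rw [defect_natCast hU hp, hW, List.take_append_of_le_length (by omega)]
  have defect_right (p : ℕ) (hp : p ≤ 3 * N) :
      defect N V p = N * (W.take (3 * N + p)).count true - U.count true * (3 * N + p) := by
    rw [defect_natCast hV hp, hW, ← length_U, List.take_length_add_append, List.count_append,
      count_wordPow, hcount]
    push_cast
    ring
  have hi := i.val_lt
  have hj := j.val_lt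
  have hm := m.val_lt
  have hbal := (hW ▸ h 3 : BalancedWord W).abs_count_window_sub_le (l := N + m.val)
    (i := 2 * N + i.val) (j := j.val) (by omega) (by omega)
  have hVim : defect N V (i + m) = defect N V (i.val + m.val : ℕ) := by simp
  have hUi : defect N U i = defect N U (2 * N + i.val : ℕ) := by simp
  have hUjm : defect N U (j + m) = defect N U (j.val + (N + m.val) : ℕ) := by simp
  have hUj : defect N U j = defect N U j.val := by simp
  rw [hVim, hUi, hUjm, hUj, defect_right _ (by omega), defect_left _ (by omega),
    defect_left _ (by omega), defect_left _ (by omega)]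
  rw [show 3 * N + (i.val + m.val) = 2 * N + i.val + (N + m.val) by ring]
  refine le_of_eq_of_le ?_ (mul_le_of_le_one_right (Nat.cast_nonneg N) hbal)
  rw [← Nat.abs_cast N, ← abs_mul, Nat.abs_cast]
  push_cast
  ring_nf

end defect

-- The increments of `a` average to zero, so one of them is nonpositive, hence at most `g - n`.
lemma sum_sub_sum_le_card_mul {G : Type*} [AddGroup G] [Fintype G] {a b : G → ℤ} {m : G} {g n : ℤ}
    (hg : 0 < g) (hmod : ∀ j, n ∣ g - (a (j + m) - a j))
    (hle : ∀ i j, (b (i + m) - a i) - (a (j + m) - a j) ≤ n) :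
    ∑ x, b x - ∑ x, a x ≤ Fintype.card G * g := by
  have sum_shift (f : G → ℤ) : ∑ x, f (x + m) = ∑ x, f x := Equiv.sum_comp (Equiv.addRight m) f
  obtain ⟨j, -, hj⟩ : ∃ j ∈ Finset.univ, a (j + m) - a j ≤ 0 := by
    refine Finset.exists_le_of_sum_le ⟨0, Finset.mem_univ 0⟩ ?_
    rw [Finset.sum_sub_distrib, sum_shift, sub_self, Finset.sum_const_zero]
  have hjn := Int.le_of_dvd (by linarith) (hmod j)
  calc ∑ x, b x - ∑ x, a x = ∑ x, (b (x + m) - a x) := by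
        rw [Finset.sum_sub_distrib, sum_shift]
    _ ≤ ∑ _x : G, g := Finset.sum_le_sum fun i _ => by linarith [hle i j]
    _ = Fintype.card G * g := by simp

lemma exists_intCast_mul_eq_gcd (N : ℕ) (Y : ℤ) : ∃ m : ZMod N, Y * m = (Int.gcd N Y : ZMod N) := by
  refine ⟨Int.gcdB N Y, ?_⟩
  have := congrArg (Int.cast : ℤ → ZMod N) (Int.gcd_eq_gcd_ab N Y)
  push_cast at this
  rw [this, ZMod.natCast_self, zero_mul, zero_add]

-- Moving by `∓m`, where `Y m ≡ gcd N Y` modulo `N`, changes `±defect` by `gcd N Y` modulo `N`.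
lemma BalancedPowers.abs_prefixSum_sub_le {N : ℕ} {U V : List Bool} (h : BalancedPowers U V)
    (hU : U.length = N) (hV : V.length = N) (hcount : V.count true = U.count true) :
    |prefixSum V - prefixSum U| ≤ Int.gcd N (U.count true) := by
  rcases Nat.eq_zero_or_pos N with rfl | hpos
  · obtain rfl := List.length_eq_zero_iff.1 hU
    obtain rfl := List.length_eq_zero_iff.1 hV
    simp
  have : NeZero N := ⟨hpos.ne'⟩
  have N_pos : (0 : ℤ) < N := by exact_mod_cast hpos
  obtain ⟨m, hm⟩ := exists_intCast_mul_eq_gcd N (U.count true)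
  have g_pos : (0 : ℤ) < Int.gcd N (U.count true) :=
    Int.natCast_pos.2 (Int.gcd_pos_of_ne_zero_left _ N_pos.ne')
  have sum_eq : ∑ x, defect N V x - ∑ x, defect N U x = N * (prefixSum V - prefixSum U) := by
    rw [sum_defect hU, sum_defect hV, hcount]; ring
  have window (m i j : ZMod N) := abs_le.1 (h.abs_defect_sub_le hU hV hcount i j m)
  generalize Int.gcd N (U.count true) = g at *
  rw [Int.cast_natCast] at hm
  have upper : ∑ x, defect N V x - ∑ x, defect N U x ≤ Fintype.card (ZMod N) * g := by
    refine sum_sub_sum_le_card_mul (n := N) (m := -m) g_pos (fun j => ?_)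
      (fun i j => (window (-m) i j).2)
    rw [← ZMod.intCast_zmod_eq_zero_iff_dvd]
    push_cast [intCast_defect]
    linear_combination -hm
  have lower : ∑ x, -defect N V x - ∑ x, -defect N U x ≤ Fintype.card (ZMod N) * g := by
    refine sum_sub_sum_le_card_mul (n := N) (m := m) g_pos (fun j => ?_)
      (fun i j => by linarith [(window m i j).1])
    rw [← ZMod.intCast_zmod_eq_zero_iff_dvd]
    push_cast [intCast_defect]
    linear_combination -hm
  rw [Finset.sum_neg_distrib, Finset.sum_neg_distrib, ZMod.card] at lower
  rw [ZMod.card] at upper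
  rw [abs_le]
  constructor <;> refine le_of_mul_le_mul_left ?_ N_pos <;> linarith

/-! ### Binary codings of 3iet words are balanced -/

/-- The displacement of a walk that reads a binary word, moving by `ρ` at each `false` and by
`ρ - τ` at each `true`; modulo `τ` every letter acts as the rotation by `ρ`. -/
def disp (ρ τ : ℝ) (W : List Bool) : ℝ := ρ * W.length - τ * W.count true

lemma disp_nil (ρ τ : ℝ) : disp ρ τ [] = 0 := by
  simp [disp]

lemma disp_cons (ρ τ : ℝ) (b : Bool) (W : List Bool) :
    disp ρ τ (b :: W) = cond b (ρ - τ) ρ + disp ρ τ W := by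
  cases b <;> simp only [disp, List.length_cons, List.count_cons_self, List.count_cons_of_ne, ne_eq,
    Bool.false_eq_true, not_false_eq_true, Nat.cast_add, Nat.cast_one, cond_true, cond_false] <;>
    ring

lemma disp_append (ρ τ : ℝ) (P Q : List Bool) :
    disp ρ τ (P ++ Q) = disp ρ τ P + disp ρ τ Q := by
  simp only [disp, List.length_append, List.count_append, Nat.cast_add]
  ring

lemma balancedWord_of_disp_sub_lt {ρ τ : ℝ} {W : List Bool} (hτ : 0 < τ)
    (h : ∀ P Q, P <+: W → Q <+: W → disp ρ τ P - disp ρ τ Q < τ) : BalancedWord W := by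
  have abs_disp_lt (U : List Bool) (hU : U <:+: W) : |disp ρ τ U| < τ := by
    obtain ⟨P, S, hW⟩ := hU
    have hP : P <+: W := ⟨U ++ S, by rw [← hW, List.append_assoc]⟩
    have hPU : P ++ U <+: W := ⟨S, hW⟩
    have lower := h _ _ hP hPU
    have upper := h _ _ hPU hP
    rw [disp_append] at lower upper
    exact abs_lt.2 ⟨by linarith, by linarith⟩
  intro U V hU hV hlen
  have lower := (abs_lt.1 (abs_disp_lt U hU)).1
  have upper := (abs_lt.1 (abs_disp_lt V hV)).2
  simp only [disp, hlen] at lower upper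
  have count_lt : (U.count true : ℝ) < V.count true + 2 :=
    lt_of_mul_lt_mul_left (by linarith) hτ.le
  exact Nat.lt_succ_iff.1 (by exact_mod_cast count_lt)

/-- The binary substitution `A ↦ 0`, `C ↦ 1` and `B ↦ 01` (for `t = false`) or `B ↦ 10`
(for `t = true`), with `0 = false` and `1 = true`. -/
def binSub (t : Bool) : Letter → List Bool
  | Letter.A => [false]
  | Letter.B => [t, !t]
  | Letter.C => [true]

/-- The binary coding of a word over `{A, B, C}`, the image of the word under `binSub t`. -/
def binCode (t : Bool) (w : List Letter) : List Bool := w.flatMap (binSub t)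

lemma binCode_append (t : Bool) (v w : List Letter) :
    binCode t (v ++ w) = binCode t v ++ binCode t w :=
  List.flatMap_append

/-- Reading the binary code of a point `y ∈ D` leads a walk from `y` to `T y ∈ D` inside `I`. -/
def WalkStep (t : Bool) (ρ τ : ℝ) (T : ℝ → ℝ) (code : ℝ → Letter) (D I : Set ℝ) : Prop :=
  ∀ y ∈ D, T y ∈ D ∧ T y = y + disp ρ τ (binSub t (code y)) ∧
    ∀ P ∈ (binSub t (code y)).inits, y + disp ρ τ P ∈ I

section WalkStep

variable {t : Bool} {ρ τ : ℝ} {T : ℝ → ℝ} {code : ℝ → Letter} {D I : Set ℝ}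

lemma WalkStep.add_disp_mem (h : WalkStep t ρ τ T code D I) (n : ℕ) {x : ℝ} (hx : x ∈ D)
    {P : List Bool} (hP : P <+: binCode t ((List.iterate T x n).map code)) :
    x + disp ρ τ P ∈ I := by
  induction n generalizing x P with
  | zero =>
    obtain rfl := List.prefix_nil.1 hP
    exact (h x hx).2.2 [] (by simp)
  | succ n ih =>
    obtain ⟨T_mem, T_eq, init_mem⟩ := h x hx
    change P <+: binSub t (code x) ++ binCode t ((List.iterate T (T x) n).map code) at hP
    rcases List.prefix_or_prefix_of_prefix hP (List.prefix_append _ _) with hP' | ⟨Q, rfl⟩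
    · exact init_mem P ((List.mem_inits _ _).2 hP')
    · have := ih T_mem ((List.prefix_append_right_inj _).1 hP)
      rwa [disp_append, ← add_assoc, ← T_eq]

lemma WalkStep.balancedWord_binCode (h : WalkStep t ρ τ T code D I) (hτ : 0 < τ)
    (hI : ∀ y ∈ I, ∀ z ∈ I, y - z < τ) (n : ℕ) {x : ℝ} (hx : x ∈ D) :
    BalancedWord (binCode t ((List.iterate T x n).map code)) :=
  balancedWord_of_disp_sub_lt hτ fun P Q hP hQ => by
    simpa using hI _ (h.add_disp_mem n hx hP) _ (h.add_disp_mem n hx hQ)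

end WalkStep

/-- The left endpoint of the interval of length `α + 2β + γ` that contains the walk along the
binary coding by `binSub t` of an orbit with parameters `(α, β, γ)`. -/
def walkStart (β : ℝ) : Bool → ℝ
  | true => -β
  | false => 0

lemma walkStep_left (t : Bool) {α β γ : ℝ} (hα : 0 < α) (hβ : 0 < β) (hγ : 0 < γ) :
    WalkStep t (β + γ) (α + 2 * β + γ) (Tleft α β γ) (codeLeft α β) (Set.Ico 0 (α + β + γ))
      (Set.Ico (walkStart β t) (walkStart β t + (α + 2 * β + γ))) := by
  rintro y ⟨_, _⟩
  cases t <;> unfold Tleft codeLeft <;> split_ifs <;>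
    simp only [binSub, Bool.not_true, Bool.not_false, List.inits, List.map_cons, List.map_nil,
      List.forall_mem_cons, List.not_mem_nil, IsEmpty.forall_iff, implies_true, and_true, disp_nil,
      disp_cons, cond_true, cond_false, walkStart] <;>
    (repeat' constructor) <;> linarith

lemma walkStep_right (t : Bool) {α β γ : ℝ} (hα : 0 < α) (hβ : 0 < β) (hγ : 0 < γ) :
    WalkStep t (β + γ) (α + 2 * β + γ) (Tright α β γ) (codeRight α β) (Set.Ioc 0 (α + β + γ))
      (Set.Ioc (walkStart β t) (walkStart β t + (α + 2 * β + γ))) := by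
  rintro y ⟨_, _⟩
  cases t <;> unfold Tright codeRight <;> split_ifs <;>
    simp only [binSub, Bool.not_true, Bool.not_false, List.inits, List.map_cons, List.map_nil,
      List.forall_mem_cons, List.not_mem_nil, IsEmpty.forall_iff, implies_true, and_true, disp_nil,
      disp_cons, cond_true, cond_false, walkStart] <;>
    (repeat' constructor) <;> linarith

/-- The factor `u₀ u₁ ⋯ uₙ₋₁` of a biinfinite word. -/
def takeWord (u : ℤ → Letter) (n : ℕ) : List Letter := (List.range n).map fun i : ℕ => u i

lemma takeWord_uLeft (α β γ x : ℝ) (n : ℕ) :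
    takeWord (uLeft α β γ x) n = (List.iterate (Tleft α β γ) x n).map (codeLeft α β) := by
  rw [← List.range_map_iterate, List.map_map]
  rfl

lemma takeWord_uRight (α β γ x : ℝ) (n : ℕ) :
    takeWord (uRight α β γ x) n = (List.iterate (Tright α β γ) x n).map (codeRight α β) := by
  rw [← List.range_map_iterate, List.map_map]
  rfl

lemma Is3ietWord.balancedWord_binCode_takeWord {u : ℤ → Letter} (hu : Is3ietWord u) (t : Bool)
    (n : ℕ) : BalancedWord (binCode t (takeWord u n)) := by
  obtain ⟨α, β, γ, x, hα, hβ, hγ, -, ⟨hx, rfl⟩ | ⟨hx, rfl⟩⟩ := hu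
  · rw [takeWord_uLeft]
    exact (walkStep_left t hα hβ hγ).balancedWord_binCode (by positivity)
      (fun y hy z hz => by linarith [hy.2, hz.1]) n hx
  · rw [takeWord_uRight]
    exact (walkStep_right t hα hβ hγ).balancedWord_binCode (by positivity)
      (fun y hy z hz => by linarith [hy.2, hz.1]) n hx

/-! ### Images of biinfinite words -/

lemma exists_int_partialSums {M : Type*} [AddCommGroup M] (f : ℤ → M) :
    ∃ c : ℤ → M, c 0 = 0 ∧ ∀ m, c (m + 1) = c m + f m := by
  refine ⟨fun m => ∑ i ∈ Finset.Ico 0 m, f i - ∑ i ∈ Finset.Ico m 0, f i, by simp, fun m => ?_⟩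
  rcases le_or_gt 0 m with hm | hm
  · simp [Finset.Ico_eq_empty_of_le hm, Finset.Ico_eq_empty_of_le (hm.trans (lt_add_one m).le),
      ← Finset.insert_Ico_right_eq_Ico_add_one hm, add_comm]
  · simp [Finset.Ico_eq_empty_of_le hm.le, Finset.Ico_eq_empty_of_le (Int.add_one_le_of_lt hm),
      ← Finset.insert_Ico_add_one_left_eq_Ico hm]

lemma exists_isImageWord (φ : Morph) (u : ℤ → Letter) : ∃ v, IsImageWord φ u v := by
  obtain ⟨c, c_zero, c_succ⟩ := exists_int_partialSums fun m => ((φ (u m)).length : ℤ)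
  have c_mono : Monotone c := monotone_int_of_le_succ fun m => by rw [c_succ]; omega
  let position (p : Σ m, Fin (φ (u m)).length) : ℤ := c p.1 + p.2
  have le_of_position_eq {p q} (h : position p = position q) : q.1 ≤ p.1 := by
    by_contra! hlt
    have := c_mono (Int.add_one_le_of_lt hlt)
    rw [c_succ] at this
    simp only [position] at h
    omega
  have position_injective : Function.Injective position := by
    rintro ⟨m, i⟩ ⟨m', i'⟩ h
    obtain rfl : m = m' := le_antisymm (le_of_position_eq h.symm) (le_of_position_eq h)
    simp only [position, add_right_inj, Nat.cast_inj, Fin.val_inj] at h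
    rw [h]
  refine ⟨Function.extend position (fun p => (φ (u p.1)).get p.2) fun _ => Letter.A, c, c_zero,
    c_succ, fun m i hi => ?_⟩
  exact position_injective.extend_apply _ _ ⟨m, i, hi⟩

lemma takeWord_succ (u : ℤ → Letter) (n : ℕ) : takeWord u (n + 1) = takeWord u n ++ [u n] := by
  simp [takeWord, List.range_succ]

lemma IsImageWord.exists_takeWord_eq_flatMap {φ : Morph} {u v : ℤ → Letter}
    (h : IsImageWord φ u v) (n : ℕ) : ∃ N, takeWord v N = (takeWord u n).flatMap φ := by
  obtain ⟨c, c_zero, c_succ, hv⟩ := h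
  suffices ∃ N : ℕ, N = c n ∧ takeWord v N = (takeWord u n).flatMap φ from
    this.imp fun _ => And.right
  induction n with
  | zero => exact ⟨0, by simp [c_zero], rfl⟩
  | succ n ih =>
    obtain ⟨N, hN, takeWord_eq⟩ := ih
    refine ⟨N + (φ (u n)).length, by push_cast; rw [c_succ, hN], ?_⟩
    rw [takeWord_succ, List.flatMap_append, List.flatMap_singleton, ← takeWord_eq, takeWord,
      List.range_add, List.map_append, takeWord, List.map_map]
    congr 1
    refine List.ext_getElem (by simp) fun i _ hi => ?_
    simpa [hN] using hv n i hi

lemma Preserves3iet.balancedWord_binCode_flatMap {φ : Morph} (hφ : Preserves3iet φ)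
    {u : ℤ → Letter} (hu : Is3ietWord u) (t : Bool) (n : ℕ) :
    BalancedWord (binCode t ((takeWord u n).flatMap φ)) := by
  obtain ⟨v, hv⟩ := exists_isImageWord φ u
  obtain ⟨N, hN⟩ := hv.exists_takeWord_eq_flatMap n
  rw [← hN]
  exact (hφ.2 u v hu hv).balancedWord_binCode_takeWord t N

/-! ### 3iet words containing high powers of two blocks -/

/-- The `T`-orbit of a point starts with the given code, after which it is at the second point. -/
def Reads {X L : Type*} (T : X → X) (code : X → L) : X → List L → X → Prop
  | x, [], y => x = y
  | x, l :: w, y => code x = l ∧ Reads T code (T x) w y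

namespace Reads

section

variable {X L : Type*} {T : X → X} {code : X → L} {v w : List L} {x y z : X}

lemma append (hv : Reads T code x v y) (hw : Reads T code y w z) :
    Reads T code x (v ++ w) z := by
  induction v generalizing x with
  | nil =>
    obtain rfl : x = y := hv
    exact hw
  | cons l v ih => exact ⟨hv.1, ih hv.2⟩

lemma map_iterate (h : Reads T code x w y) : (List.iterate T x w.length).map code = w := by
  induction w generalizing x with
  | nil => rfl
  | cons l w ih => exact congrArg₂ List.cons h.1 (ih h.2)

end

lemma wordPow {L : Type*} {T : ℝ → ℝ} {code : ℝ → L} {w : List L} {δ : ℝ} (hδ : 0 < δ) (k : ℕ)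
    {s : ℝ} (h : ∀ y ∈ Set.Ico s (s + k * δ), Reads T code y w (y + δ)) :
    Reads T code s (wordPow w k) (s + k * δ) := by
  induction k generalizing s with
  | zero => simp [wordPow_zero, Reads]
  | succ k ih =>
    have end_eq : s + (k + 1 : ℕ) * δ = s + δ + k * δ := by push_cast; ring
    have hk : 0 ≤ k * δ := by positivity
    rw [wordPow_succ, end_eq]
    rw [end_eq] at h
    exact (h s ⟨le_rfl, by linarith⟩).append (ih fun y hy => h y ⟨by linarith [hy.1], hy.2⟩)

end Reads

section Tleft

variable {α β γ x : ℝ}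

lemma reads_A (hx : x < α) :
    Reads (Tleft α β γ) (codeLeft α β) x [Letter.A] (x + β + γ) := by
  simp [Reads, Tleft, codeLeft, hx]

lemma reads_B (hαx : α ≤ x) (hx : x < α + β) :
    Reads (Tleft α β γ) (codeLeft α β) x [Letter.B] (x - α + γ) := by
  simp [Reads, Tleft, codeLeft, hαx.not_gt, hx]

lemma reads_C (hβ : 0 ≤ β) (hx : α + β ≤ x) :
    Reads (Tleft α β γ) (codeLeft α β) x [Letter.C] (x - α - β) := by
  have hαx : α ≤ x := by linarith
  simp [Reads, Tleft, codeLeft, hαx.not_gt, hx.not_gt]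

lemma reads_replicate_C (hα : 0 ≤ α) (hβ : 0 ≤ β) (hx : 0 ≤ x) (q : ℕ) :
    Reads (Tleft α β γ) (codeLeft α β) (x + q * (α + β)) (List.replicate q Letter.C) x := by
  induction q with
  | zero => simp [Reads]
  | succ q ih =>
    have hq : 0 ≤ q * (α + β) := by positivity
    have step := reads_C (γ := γ) hβ (show α + β ≤ x + (q + 1 : ℕ) * (α + β) by
      push_cast; linarith)
    rw [show x + (q + 1 : ℕ) * (α + β) - α - β = x + q * (α + β) by push_cast; ring] at step
    exact step.append ih

end Tleft

/-- Under the exchanges with parameters `(1, 1, 2q + 1 + δ)`, where `δ > 0`, reading `w` moves the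
points of `I` by `δ`. -/
def Drifts (q : ℕ) (w : List Letter) (I : Set ℝ) : Prop :=
  ∀ δ > 0, ∀ y ∈ I, Reads (Tleft 1 1 (2 * q + 1 + δ)) (codeLeft 1 1) y w (y + δ)

lemma drifts_A (q : ℕ) :
    Drifts q ([Letter.A] ++ List.replicate (q + 1) Letter.C) (Set.Ico 0 1) := by
  rintro δ hδ y ⟨hy₀, hy₁⟩
  refine (reads_A hy₁).append ?_
  convert reads_replicate_C zero_le_one zero_le_one (add_nonneg hy₀ hδ.le) (q + 1) using 1
  push_cast
  ring

lemma drifts_B (q : ℕ) :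
    Drifts q ([Letter.B] ++ List.replicate q Letter.C) (Set.Ico 1 2) := by
  rintro δ hδ y ⟨hy₁, hy₂⟩
  refine (reads_B hy₁ (by linarith)).append ?_
  convert reads_replicate_C zero_le_one zero_le_one (show 0 ≤ y + δ by linarith) q using 1
  ring

lemma drifts_C (q : ℕ) :
    Drifts q ([Letter.C] ++ ([Letter.A] ++ List.replicate q Letter.C)) (Set.Ico 2 3) := by
  rintro δ hδ y ⟨hy₂, hy₃⟩
  refine (reads_C zero_le_one (by linarith)).append ((reads_A (by linarith)).append ?_)
  convert reads_replicate_C zero_le_one zero_le_one (show 0 ≤ y + δ by linarith) q using 1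
  ring

lemma is3ietWord_uLeft_one_one {γ x : ℝ} (hγ : 0 < γ) (hirr : Irrational γ)
    (hx : x ∈ Set.Ico 0 (1 + 1 + γ)) : Is3ietWord (uLeft 1 1 γ x) := by
  refine ⟨1, 1, γ, x, one_pos, one_pos, hγ, ?_, Or.inl ⟨hx, rfl⟩⟩
  rw [LinearIndependent.pair_iff' (by norm_num)]
  rintro a ha
  refine hirr ⟨2 * a - 1, ?_⟩
  rw [Rat.smul_def] at ha
  push_cast
  linarith

-- The orbit passes the point `s` in steps of length `δ`, for an irrational `δ < 1 / k`.
lemma exists_is3ietWord_takeWord_eq {q : ℕ} {v w : List Letter} {s : ℝ}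
    (hs : s ∈ Set.Icc 1 2) (hv : Drifts q v (Set.Ico (s - 1) s))
    (hw : Drifts q w (Set.Ico s (s + 1))) (k : ℕ) :
    ∃ u n, Is3ietWord u ∧ takeWord u n = wordPow v k ++ wordPow w k := by
  obtain ⟨δ, hirr, hδ, hδk⟩ := exists_irrational_btwn (show (0 : ℝ) < 1 / (k + 1) by positivity)
  have hk : 0 ≤ k * δ := by positivity
  have hk₁ : k * δ < 1 := by
    rw [lt_div_iff₀ (by positivity)] at hδk
    linarith
  have reads_v := Reads.wordPow hδ k (s := s - k * δ) fun y hy =>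
    hv δ hδ y ⟨by linarith [hy.1], by linarith [hy.2]⟩
  have reads_w := Reads.wordPow hδ k fun y hy => hw δ hδ y ⟨hy.1, by linarith [hy.2]⟩
  rw [sub_add_cancel] at reads_v
  have γ_irr : Irrational (2 * q + 1 + δ) := by exact_mod_cast hirr.natCast_add (2 * q + 1)
  refine ⟨_, _, is3ietWord_uLeft_one_one (by positivity) γ_irr ⟨?_, ?_⟩,
    (takeWord_uLeft ..).trans (reads_v.append reads_w).map_iterate⟩
  · linarith [hs.1]
  · have : (0 : ℝ) ≤ q := q.cast_nonneg
    linarith [hs.2]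

lemma Preserves3iet.balancedPowers {φ : Morph} (hφ : Preserves3iet φ) {q : ℕ} {v w : List Letter}
    {s : ℝ} (hs : s ∈ Set.Icc 1 2) (hv : Drifts q v (Set.Ico (s - 1) s))
    (hw : Drifts q w (Set.Ico s (s + 1))) (t : Bool) :
    BalancedPowers (binCode t (v.flatMap φ)) (binCode t (w.flatMap φ)) := by
  intro k
  obtain ⟨u, n, hu, takeWord_eq⟩ := exists_is3ietWord_takeWord_eq hs hv hw k
  have := hφ.balancedWord_binCode_flatMap hu t n
  rwa [takeWord_eq, List.flatMap_append, flatMap_wordPow, flatMap_wordPow, binCode_append, binCode,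
    binCode, flatMap_wordPow, flatMap_wordPow] at this

/-! ### Letter counts of binary codings -/

/-- The number of `0`s in the binary codings of `w`. -/
def zeros (w : List Letter) : ℤ := w.count Letter.A + w.count Letter.B

/-- The number of `1`s in the binary codings of `w`. -/
def ones (w : List Letter) : ℤ := w.count Letter.B + w.count Letter.C

/-- The determinant of the vectors that count the `0`s and `1`s in the binary codings of two
words. -/
def parikhDet (v w : List Letter) : ℤ := zeros v * ones w - zeros w * ones v

section

variable (t : Bool) (u v w : List Letter)

lemma zeros_append : zeros (v ++ w) = zeros v + zeros w := by
  simp only [zeros, List.count_append]; push_cast; ring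

lemma ones_append : ones (v ++ w) = ones v + ones w := by
  simp only [ones, List.count_append]; push_cast; ring

lemma parikhDet_append_left : parikhDet (u ++ v) w = parikhDet u w + parikhDet v w := by
  simp only [parikhDet, zeros_append, ones_append]; ring

lemma parikhDet_append_right : parikhDet u (v ++ w) = parikhDet u v + parikhDet u w := by
  simp only [parikhDet, zeros_append, ones_append]; ring

lemma parikhDet_self : parikhDet w w = 0 := sub_self _

lemma parikhDet_swap : parikhDet w v = -parikhDet v w := (neg_sub _ _).symm

lemma binCode_cons (l : Letter) : binCode t (l :: w) = binSub t l ++ binCode t w :=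
  List.flatMap_cons

lemma count_true_binCode : ((binCode t w).count true : ℤ) = ones w := by
  induction w with
  | nil => rfl
  | cons l w ih =>
    rw [binCode_cons, List.count_append, Nat.cast_add, ih]
    cases l <;> cases t <;> simp +arith [binSub, ones]

lemma length_binCode : ((binCode t w).length : ℤ) = zeros w + ones w := by
  induction w with
  | nil => rfl
  | cons l w ih =>
    rw [binCode_cons, List.length_append, Nat.cast_add, ih]
    cases l <;> simp +arith [binSub, zeros, ones]

lemma prefixSum_binCode_append : prefixSum (binCode t (v ++ w)) =
    prefixSum (binCode t v) + prefixSum (binCode t w) + (zeros w + ones w) * ones v := by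
  rw [binCode_append, prefixSum_append, length_binCode, count_true_binCode]

lemma prefixSum_binCode_append_comm_sub :
    prefixSum (binCode t (w ++ v)) - prefixSum (binCode t (v ++ w)) = parikhDet v w := by
  simp only [prefixSum_binCode_append, parikhDet]
  ring

lemma prefixSum_binCode_true_sub_false :
    prefixSum (binCode true w) - prefixSum (binCode false w) = w.count Letter.B := by
  induction w with
  | nil => simp [binCode]
  | cons l w ih =>
    have sub_of_letter : prefixSum (binSub true l) - prefixSum (binSub false l) =
        [l].count Letter.B := by
      cases l <;> simp [binSub, prefixSum, Finset.sum_range_succ]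
    have count_eq : (binSub true l).count true = (binSub false l).count true := by
      cases l <;> rfl
    rw [binCode_cons, binCode_cons, prefixSum_append, prefixSum_append, length_binCode,
      length_binCode, count_eq, ← List.singleton_append, List.count_append, Nat.cast_add]
    linear_combination ih + sub_of_letter

end

lemma zeros_ones_eq_append {a b c : List Letter} (hab : parikhDet a b = parikhDet a c)
    (hbc : parikhDet b c = parikhDet a c) (hac : parikhDet a c ≠ 0) :
    zeros b = zeros (a ++ c) ∧ ones b = ones (a ++ c) := by
  rw [zeros_append, ones_append]
  constructor <;> refine mul_left_cancel₀ hac ?_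
  · linear_combination (norm := (simp only [parikhDet]; ring)) zeros a * hbc + zeros c * hab
  · linear_combination (norm := (simp only [parikhDet]; ring)) ones a * hbc + ones c * hab

lemma BalancedPowers.parikhDet_eq_zero {t : Bool} {v w : List Letter}
    (h : BalancedPowers (binCode t v) (binCode t w)) : parikhDet v w = 0 := by
  have slope : ((binCode t v).length * (binCode t w).count true : ℤ) =
      (binCode t w).length * (binCode t v).count true := by exact_mod_cast h.length_mul_count_eq
  simp only [length_binCode, count_true_binCode] at slope
  unfold parikhDet
  linear_combination slope

lemma BalancedPowers.abs_prefixSum_binCode_sub_le {t : Bool} {v w : List Letter}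
    (h : BalancedPowers (binCode t v) (binCode t w)) (hzeros : zeros v = zeros w)
    (hones : ones v = ones w) :
    |prefixSum (binCode t w) - prefixSum (binCode t v)| ≤ Int.gcd (zeros v) (ones v) := by
  have length_eq : (binCode t w).length = (binCode t v).length := by
    zify; rw [length_binCode, length_binCode, hzeros, hones]
  have count_eq : (binCode t w).count true = (binCode t v).count true := by
    zify; rw [count_true_binCode, count_true_binCode, hones]
  have := h.abs_prefixSum_sub_le rfl length_eq count_eq
  rwa [length_binCode, count_true_binCode, Int.gcd_add_right_left_of_dvd _ dvd_rfl] at this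

/-! ### Balanced triples of words -/

/-- In both binary codings, high powers of `a c` are balanced against those of `b`, and high powers
of `b` against those of `c a`. -/
structure BalancedTriple (a b c : List Letter) : Prop where
  append_left : ∀ t, BalancedPowers (binCode t (a ++ c)) (binCode t b)
  append_right : ∀ t, BalancedPowers (binCode t b) (binCode t (c ++ a))

/-- The number of letters `B` by which `b` exceeds `a c`. -/
def excess (a b c : List Letter) : ℤ := b.count Letter.B - (a ++ c).count Letter.B

lemma BalancedTriple.parikhDet_eq {a b c : List Letter} (h : BalancedTriple a b c) :
    parikhDet a b = parikhDet b c := by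
  have := (h.append_left true).parikhDet_eq_zero
  rw [parikhDet_append_left, parikhDet_swap b c] at this
  linarith

lemma BalancedTriple.parikhDet_eq_of_append {a b c : List Letter} (h : BalancedTriple a b c)
    (h_append : BalancedTriple (a ++ c) (b ++ c) c) :
    parikhDet a b = parikhDet a c ∧ parikhDet b c = parikhDet a c := by
  have hab := h.parikhDet_eq
  have hac := h_append.parikhDet_eq
  simp only [parikhDet_append_left, parikhDet_append_right, parikhDet_self,
    parikhDet_swap b c] at hac
  constructor <;> linarith

lemma abs_eq_and_abs_sub_le_of_dvd {g l d e : ℤ} (hl : l ≠ 0) (hgl : g ∣ l) (hde : d ≠ e)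
    (hd : |d| ≤ g) (he : |e| ≤ g) (hld : |l - d| ≤ g) (hle : |l - e| ≤ g) :
    |l| = g ∧ |d - e| ≤ g := by
  wlog hpos : 0 < l generalizing l d e
  · have := @this (-l) (-d) (-e) (neg_ne_zero.2 hl) (hgl.neg_right) (neg_injective.ne hde)
      (by rwa [abs_neg]) (by rwa [abs_neg]) (by rwa [neg_sub_neg, abs_sub_comm])
      (by rwa [neg_sub_neg, abs_sub_comm]) (by omega)
    rwa [abs_neg, neg_sub_neg, abs_sub_comm] at this
  obtain ⟨m, rfl⟩ := hgl
  rw [abs_le] at hd he hld hle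
  have g_pos : 0 < g := lt_of_le_of_ne (by linarith) (by rintro rfl; simp at hpos)
  have m_pos : 0 < m := pos_of_mul_pos_right hpos g_pos.le
  have m_le : m ≤ 2 := le_of_mul_le_mul_left (by linarith) g_pos
  have m_ne : m ≠ 2 := by rintro rfl; exact hde (by linarith)
  obtain rfl : m = 1 := by omega
  rw [mul_one] at *
  exact ⟨abs_of_pos g_pos, abs_le.2 ⟨by linarith, by linarith⟩⟩

-- Both values of `prefixSum b - prefixSum (a c)`, for the two codings, lie within distance
-- `gcd (zeros b) (ones b)` of `0` and of `parikhDet a c`.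
lemma BalancedTriple.abs_parikhDet_eq_gcd_and_abs_excess_le {a b c : List Letter}
    (h : BalancedTriple a b c) (hzeros : zeros b = zeros (a ++ c)) (hones : ones b = ones (a ++ c))
    (hdet : parikhDet a c ≠ 0) (hexcess : excess a b c ≠ 0) :
    |parikhDet a c| = Int.gcd (zeros b) (ones b) ∧
      |excess a b c| ≤ Int.gcd (zeros b) (ones b) := by
  let gap (t : Bool) : ℤ := prefixSum (binCode t b) - prefixSum (binCode t (a ++ c))
  have gap_sub_gap : gap true - gap false = excess a b c := by
    simp only [gap, excess]
    linear_combination prefixSum_binCode_true_sub_false b -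
      prefixSum_binCode_true_sub_false (a ++ c)
  have abs_gap_le (t : Bool) : |gap t| ≤ Int.gcd (zeros b) (ones b) := by
    rw [hzeros, hones]
    exact (h.append_left t).abs_prefixSum_binCode_sub_le hzeros.symm hones.symm
  have abs_parikhDet_sub_gap_le (t : Bool) :
      |parikhDet a c - gap t| ≤ Int.gcd (zeros b) (ones b) := by
    rw [← prefixSum_binCode_append_comm_sub t, sub_sub_sub_cancel_right]
    refine (h.append_right t).abs_prefixSum_binCode_sub_le ?_ ?_
    · rw [hzeros, zeros_append, zeros_append, add_comm]
    · rw [hones, ones_append, ones_append, add_comm]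
  have gcd_dvd : (Int.gcd (zeros b) (ones b) : ℤ) ∣ parikhDet a c := by
    have : parikhDet a c = zeros b * ones c - zeros c * ones b := by
      rw [hzeros, hones, zeros_append, ones_append, parikhDet]; ring
    rw [this]
    exact dvd_sub ((Int.gcd_dvd_left ..).mul_right _) ((Int.gcd_dvd_right ..).mul_left _)
  rw [← gap_sub_gap]
  exact abs_eq_and_abs_sub_le_of_dvd hdet gcd_dvd
    (sub_ne_zero.1 (gap_sub_gap ▸ hexcess)) (abs_gap_le true) (abs_gap_le false)
    (abs_parikhDet_sub_gap_le true) (abs_parikhDet_sub_gap_le false)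

lemma abs_parikhDet_eq_one_of_dvd {v w : List Letter} (hne : parikhDet v w ≠ 0)
    (hv : parikhDet v w ∣ zeros v ∧ parikhDet v w ∣ ones v)
    (hw : parikhDet v w ∣ zeros w ∧ parikhDet v w ∣ ones w) : |parikhDet v w| = 1 := by
  have sq_dvd : parikhDet v w * parikhDet v w ∣ parikhDet v w * 1 := by
    rw [mul_one]
    exact dvd_sub (mul_dvd_mul hv.1 hw.2) (mul_dvd_mul hw.1 hv.2)
  exact Int.isUnit_iff_abs_eq.1 (isUnit_of_dvd_one ((mul_dvd_mul_iff_left hne).1 sq_dvd))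

lemma BalancedTriple.abs_parikhDet_eq_one_and_abs_excess_eq_one {a b c : List Letter}
    (h : BalancedTriple a b c) (h_append : BalancedTriple (a ++ c) (b ++ c) c)
    (hdet : parikhDet a c ≠ 0) (hexcess : excess a b c ≠ 0) :
    |parikhDet a c| = 1 ∧ |excess a b c| = 1 := by
  obtain ⟨hab, hbc⟩ := h.parikhDet_eq_of_append h_append
  obtain ⟨hzeros, hones⟩ := zeros_ones_eq_append hab hbc hdet
  obtain ⟨det_eq, excess_le⟩ := h.abs_parikhDet_eq_gcd_and_abs_excess_le hzeros hones hdet hexcess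
  have det_append : parikhDet (a ++ c) c = parikhDet a c := by
    rw [parikhDet_append_left, parikhDet_self, add_zero]
  have excess_append : excess (a ++ c) (b ++ c) c = excess a b c := by
    simp only [excess, List.count_append]; push_cast; ring
  obtain ⟨det_append_eq, -⟩ := h_append.abs_parikhDet_eq_gcd_and_abs_excess_le
    (by simp only [zeros_append, hzeros]) (by simp only [ones_append, hones])
    (by rwa [det_append]) (by rwa [excess_append])
  rw [det_append, zeros_append, ones_append] at det_append_eq
  have dvd_b : parikhDet a c ∣ zeros b ∧ parikhDet a c ∣ ones b := by
    simp only [← abs_dvd (parikhDet a c), det_eq, Int.gcd_dvd_left, Int.gcd_dvd_right, and_self]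
  have dvd_bc : parikhDet a c ∣ zeros b + zeros c ∧ parikhDet a c ∣ ones b + ones c := by
    simp only [← abs_dvd (parikhDet a c), det_append_eq, Int.gcd_dvd_left, Int.gcd_dvd_right,
      and_self]
  have dvd_c : parikhDet a c ∣ zeros c ∧ parikhDet a c ∣ ones c :=
    ⟨(dvd_add_right dvd_b.1).1 dvd_bc.1, (dvd_add_right dvd_b.2).1 dvd_bc.2⟩
  have dvd_a : parikhDet a c ∣ zeros a ∧ parikhDet a c ∣ ones a := by
    rw [hzeros, hones, zeros_append, ones_append] at dvd_b
    exact ⟨(dvd_add_left dvd_c.1).1 dvd_b.1, (dvd_add_left dvd_c.2).1 dvd_b.2⟩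
  have det_eq_one := abs_parikhDet_eq_one_of_dvd hdet dvd_a dvd_c
  refine ⟨det_eq_one, le_antisymm ?_ (Int.one_le_abs hexcess)⟩
  rwa [← det_eq, det_eq_one] at excess_le

/-! ### The incidence matrix -/

lemma incMat_mul_Emat_mul_transpose (φ : Morph) : incMat φ * Emat * (incMat φ)ᵀ =
    Matrix.of fun i j => parikhDet (φ (ltr i)) (φ (ltr j)) := by
  ext i j
  simp only [Emat, Matrix.mul_apply, incMat, ltr, of_apply, cons_val', cons_val_fin_one,
    Fin.sum_univ_three, cons_val_zero, cons_val_one, cons_val, transpose_apply, parikhDet, zeros,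
    ones]
  ring

lemma det_incMat (φ : Morph) : (incMat φ).det =
    (φ Letter.B).count Letter.B * parikhDet (φ Letter.A) (φ Letter.C) -
      (φ Letter.A).count Letter.B * parikhDet (φ Letter.B) (φ Letter.C) -
      (φ Letter.C).count Letter.B * parikhDet (φ Letter.A) (φ Letter.B) := by
  rw [Matrix.det_fin_three]
  simp only [incMat, ltr, Matrix.cons_val_zero, Matrix.cons_val_one, Matrix.cons_val, parikhDet,
    zeros, ones]
  ring

namespace Preserves3iet

variable {φ : Morph}

lemma balancedTriple (hφ : Preserves3iet φ) (q : ℕ) :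
    BalancedTriple (([Letter.A] ++ List.replicate q Letter.C).flatMap φ)
      (([Letter.B] ++ List.replicate q Letter.C).flatMap φ) (φ Letter.C) where
  append_left t := by
    have := hφ.balancedPowers (s := 1) (by norm_num) (by simpa using drifts_A q)
      (by convert drifts_B q using 2; norm_num) t
    simpa [List.replicate_succ'] using this
  append_right t := by
    have := hφ.balancedPowers (s := 2) (by norm_num) (by convert drifts_B q using 2; norm_num)
      (by convert drifts_C q using 2; norm_num) t
    simpa using this

lemma balancedTriple_image (hφ : Preserves3iet φ) :
    BalancedTriple (φ Letter.A) (φ Letter.B) (φ Letter.C) := by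
  simpa using hφ.balancedTriple 0

lemma balancedTriple_image_append (hφ : Preserves3iet φ) :
    BalancedTriple (φ Letter.A ++ φ Letter.C) (φ Letter.B ++ φ Letter.C) (φ Letter.C) := by
  simpa using hφ.balancedTriple 1

lemma incMat_mul_Emat_mul_transpose_eq_smul (hφ : Preserves3iet φ) :
    incMat φ * Emat * (incMat φ)ᵀ = parikhDet (φ Letter.A) (φ Letter.C) • Emat := by
  obtain ⟨hab, hbc⟩ :=
    hφ.balancedTriple_image.parikhDet_eq_of_append hφ.balancedTriple_image_append
  rw [incMat_mul_Emat_mul_transpose]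
  ext i j
  fin_cases i <;> fin_cases j <;>
    simp [ltr, Emat, hab, hbc, parikhDet_self, parikhDet_swap (φ Letter.A),
      parikhDet_swap (φ Letter.B) (φ Letter.C)]

lemma det_incMat_eq_mul (hφ : Preserves3iet φ) :
    (incMat φ).det = parikhDet (φ Letter.A) (φ Letter.C) *
      excess (φ Letter.A) (φ Letter.B) (φ Letter.C) := by
  obtain ⟨hab, hbc⟩ :=
    hφ.balancedTriple_image.parikhDet_eq_of_append hφ.balancedTriple_image_append
  rw [det_incMat, hab, hbc, excess, List.count_append, Nat.cast_add]
  ring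

end Preserves3iet

/-- The incidence matrix of a 3iet preserving morphism, if nonsingular, lies in
E(3,ℕ): it satisfies M · E · Mᵀ = ±E and det M = ±1. -/
theorem incidence_matrix_mem_E3N (φ : Morph) (hφ : Preserves3iet φ)
    (hdet : (incMat φ).det ≠ 0) :
    incMat φ ∈ E3N := by
  rw [hφ.det_incMat_eq_mul] at hdet
  obtain ⟨abs_parikhDet, abs_excess⟩ :=
    hφ.balancedTriple_image.abs_parikhDet_eq_one_and_abs_excess_eq_one
      hφ.balancedTriple_image_append (left_ne_zero_of_mul hdet) (right_ne_zero_of_mul hdet)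
  refine ⟨fun i j => Int.natCast_nonneg _, ?_, ?_⟩
  · rw [hφ.incMat_mul_Emat_mul_transpose_eq_smul]
    rcases eq_or_eq_neg_of_abs_eq abs_parikhDet with h | h
    · exact Or.inl (by rw [h, one_smul])
    · exact Or.inr (by rw [h, neg_one_smul])
  · rw [hφ.det_incMat_eq_mul]
    exact eq_or_eq_neg_of_abs_eq (by rw [abs_mul, abs_parikhDet, abs_excess, one_mul])
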